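/- Let θ : ℝ → ℝ be smooth, let R ∈ (0,∞), assume Hypothesis (H_R) holds, and assume θ(t) ≤ 0 for all t ∈ ℝ. Then for every x ∈ ℝ there exists a nonnegative Borel measure μ_x on ℝ with support contained in [−π/R, π/R] such that for every integer n ≥ 1, 𝒮_n^{θ,g_R}(x) = n! · ∫ t^{n−1} dμ_x(t). -/

import Mathlib

noncomputable section

/-- `g_R(t) = -(R/π)·log(1 - (π/R)·t)`. -/
def gR (R t : ℝ) : ℝ := -(R / Real.pi) * Real.log (1 - (Real.pi / R) * t)

/-- `f` is a (smooth) solution of `f'' + θ·f = 0`. -/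
def IsSolution (θ f : ℝ → ℝ) : Prop :=
  ContDiff ℝ (⊤ : ℕ∞) f ∧ ∀ t, deriv (deriv f) t + θ t * f t = 0

/-- `f₁, f₂` is the fundamental pair of solutions of `f'' + θ·f = 0` at `x`:
`f₁(x) = f₂'(x) = 1`, `f₂(x) = f₁'(x) = 0`. -/
def IsFundPair (θ : ℝ → ℝ) (x : ℝ) (f₁ f₂ : ℝ → ℝ) : Prop :=
  IsSolution θ f₁ ∧ IsSolution θ f₂ ∧
  f₁ x = 1 ∧ deriv f₁ x = 0 ∧ f₂ x = 0 ∧ deriv f₂ x = 1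

/-- The `n`-th `g_R`-Schwarzian `𝒮_n^{θ,g_R}(x)`, computed from the fundamental pair
`f₁, f₂` at `x`: the `n`-th derivative at `t = 0` of `t ↦ h_x(x + g_R(t))`,
where `h_x = f₂/f₁`. -/
def SchR (R x : ℝ) (f₁ f₂ : ℝ → ℝ) (n : ℕ) : ℝ :=
  iteratedDeriv n (fun t => f₂ (x + gR R t) / f₁ (x + gR R t)) 0

/-- The determinant `𝒟_n^{θ,g_R}(x)` of the `n×n` Hankel matrix with `(i,j)` entry
`𝒮_{i+j-1}^{θ,g_R}(x)/(i+j-1)!`. -/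
def DetR (R x : ℝ) (f₁ f₂ : ℝ → ℝ) (n : ℕ) : ℝ :=
  (Matrix.of fun i j : Fin n =>
    SchR R x f₁ f₂ (i.1 + j.1 + 1) / (Nat.factorial (i.1 + j.1 + 1) : ℝ)).det

/-- Hypothesis (H_R): `f₁, f₂` are linearly independent solutions of `f'' + θ·f = 0`
(constant Wronskian `W = f₁f₂' - f₁'f₂ ≠ 0`) and `h = f₂/f₁` admits a meromorphic
extension `H` to the strip `{|Im z| < R}` (holomorphic off the real zeros of `f₁`,
with poles at those zeros) which satisfies `W·Im H(z)·Im z > 0` for `0 < Im z < R`. -/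
def HypR (θ : ℝ → ℝ) (R : ℝ) : Prop :=
  ∃ (f₁ f₂ : ℝ → ℝ) (H : ℂ → ℂ),
    IsSolution θ f₁ ∧ IsSolution θ f₂ ∧
    f₁ 0 * deriv f₂ 0 - deriv f₁ 0 * f₂ 0 ≠ 0 ∧
    (∀ t : ℝ, f₁ t ≠ 0 → H t = ((f₂ t / f₁ t : ℝ) : ℂ)) ∧
    DifferentiableOn ℂ H
      {z : ℂ | |z.im| < R ∧ ∀ t : ℝ, f₁ t = 0 → z ≠ (t : ℂ)} ∧
    (∀ t : ℝ, f₁ t = 0 →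
      Filter.Tendsto (fun z => ‖H z‖) (nhdsWithin (t : ℂ) {(t : ℂ)}ᶜ) Filter.atTop) ∧
    (∀ z : ℂ, 0 < z.im → z.im < R →
      0 < (f₁ 0 * deriv f₂ 0 - deriv f₁ 0 * f₂ 0) * (H z).im * z.im)

/-- `(i,j)` entry (1-based, clamped to ℕ) of the matrix `T(f,n)(t)`:
`f^{(j-i)}(t)/(j-i)!` if `i ≤ j`, and `0` otherwise. -/
def Tentry (f : ℝ → ℝ) (t : ℝ) (i j : ℕ) : ℝ :=
  if i ≤ j then iteratedDeriv (j - i) f t / (Nat.factorial (j - i) : ℝ) else 0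

end

noncomputable section

open MeasureTheory Filter

/-!
If `f₁` has no zero, then `h_x = f₂ / f₁` is the image of `h` under a real Möbius transformation
whose determinant has the sign of the Wronskian, so it continues to a function that is holomorphic
near `0 ≤ im z < R`, real on the axis and of positive imaginary part above it; the poles of `h` are
harmless because a Möbius transformation is continuous at `∞`. When `θ ≤ 0` the square of `f₁` is
convex with a critical point at `x`, whence `f₁² ≥ 1`.

The function `g_R` maps the upper half plane onto the strip `0 < im z < R` and is real on
`(-R/π, R/π)`, so `G(w) = h_x(x + g_R(w))` is a Pick function, analytic across that interval. The
function `z ↦ G(1/z)` on the lower half plane also has nonnegative imaginary part, and it is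
analytic across the real axis outside `[-π/R, π/R]`. The measure is the limit of the densities
`π⁻¹ im G(1/(t - iε))` on `[-ρ, ρ]` as `ε → 0`, where `ρ > π/R` (Stieltjes inversion): by Cauchy's
theorem their moments are integrals over a lower semicircle of radius `ρ`, where the limit may be
taken under the integral sign, and moment sequences of measures on a compact set are closed under
pointwise limits. The inversion `z ↦ 1/z` and Schwarz reflection turn the limits into Cauchy
integrals for the Taylor coefficients of `G` at `0`. Since `ρ > π/R` is arbitrary, the size of these
moments confines the measure to `[-π/R, π/R]`.
-/

section
open Set Topology Metric ComplexConjugate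

/-! ### Moment sequences on compact sets -/

/-- `a` is the moment sequence of a finite measure carried by `S`. -/
def IsMomentSeqOn (a : ℕ → ℝ) (S : Set ℝ) : Prop :=
  ∃ μ : Measure ℝ, IsFiniteMeasure μ ∧ μ Sᶜ = 0 ∧ ∀ k, ∫ t, t ^ k ∂μ = a k

theorem integrable_of_measure_compl_eq_zero {X E : Type*} [TopologicalSpace X] [T2Space X]
    [MeasurableSpace X] [OpensMeasurableSpace X] [NormedAddCommGroup E] {μ : Measure X}
    [IsFiniteMeasureOnCompacts μ] {K : Set X} (hK : IsCompact K) (hμ : μ Kᶜ = 0) {f : X → E}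
    (hf : ContinuousOn f K) : Integrable f μ := by
  rw [← Measure.restrict_eq_self_of_ae_mem (s := K) hμ]
  exact hf.integrableOn_compact' hK hK.measurableSet

theorem isMomentSeqOn_density {d : ℝ → ℝ} {a b : ℝ} (hab : a ≤ b)
    (hd : ContinuousOn d (Icc a b)) (hd₀ : ∀ t ∈ Icc a b, 0 ≤ d t) :
    IsMomentSeqOn (fun k ↦ ∫ t in a..b, t ^ k * d t) (Icc a b) := by
  set ν := (volume.restrict (Icc a b)).withDensity fun t ↦ ENNReal.ofReal (d t)
  have hd_int : IntegrableOn d (Icc a b) := hd.integrableOn_Icc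
  refine ⟨ν, isFiniteMeasure_withDensity_ofReal hd_int.2, ?_, fun k ↦ ?_⟩
  · exact withDensity_absolutelyContinuous _ _ (by simp [Measure.restrict_apply])
  · change _ = ∫ t in a..b, t ^ k * d t
    rw [integral_withDensity_eq_integral_toReal_smul₀ hd_int.1.aemeasurable.ennreal_ofReal
      (by simp), intervalIntegral.integral_of_le hab, ← integral_Icc_eq_integral_Ioc]
    refine setIntegral_congr_fun measurableSet_Icc fun t ht ↦ ?_
    simp only [ENNReal.toReal_ofReal (hd₀ t ht), smul_eq_mul, mul_comm]

theorem tendsto_integral_of_tendsto_of_isCompact {ι X : Type*} [TopologicalSpace X] [T2Space X]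
    [NormalSpace X] [MeasurableSpace X] [OpensMeasurableSpace X] {l : Filter ι} {K : Set X}
    (hK : IsCompact K)
    {ν : ι → FiniteMeasure X} {μ : FiniteMeasure X}
    (hν : Tendsto ν l (𝓝 μ)) (hνK : ∀ᶠ i in l, (ν i : Measure X) Kᶜ = 0)
    (hμK : (μ : Measure X) Kᶜ = 0) {f : X → ℝ} (hf : ContinuousOn f K) :
    Tendsto (fun i ↦ ∫ x, f x ∂(ν i : Measure X)) l (𝓝 (∫ x, f x ∂(μ : Measure X))) := by
  have : CompactSpace K := isCompact_iff_compactSpace.1 hK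
  obtain ⟨g, -, hg⟩ := BoundedContinuousFunction.exists_norm_eq_domRestrict_eq_of_closed
    (BoundedContinuousFunction.mkOfCompact ⟨K.domRestrict f, hf.domRestrict⟩) hK.isClosed
  have hgf : EqOn g f K := fun x hx ↦ DFunLike.congr_fun hg ⟨x, hx⟩
  have h_integral {ν : Measure X} (hνK : ν Kᶜ = 0) : ∫ x, g x ∂ν = ∫ x, f x ∂ν :=
    integral_congr_ae <| mem_of_superset hνK hgf
  rw [← h_integral hμK]
  refine (FiniteMeasure.tendsto_iff_forall_integral_tendsto.1 hν g).congr' ?_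
  filter_upwards [hνK] with i hi using h_integral hi

theorem isClosed_setOf_isMomentSeqOn {K : Set ℝ} (hK : IsCompact K) :
    IsClosed {a | IsMomentSeqOn a K} := by
  refine isClosed_iff_ultrafilter.2 fun a u hua hu ↦ ?_
  have h_choice : ∀ b, ∃ μ : FiniteMeasure ℝ, IsMomentSeqOn b K →
      (μ : Measure ℝ) Kᶜ = 0 ∧ ∀ k, ∫ t, t ^ k ∂(μ : Measure ℝ) = b k := by
    intro b
    by_cases hb : IsMomentSeqOn b K
    · obtain ⟨μ, hμ, hμK, h_moments⟩ := hb
      exact ⟨⟨μ, hμ⟩, fun _ ↦ ⟨hμK, h_moments⟩⟩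
    · exact ⟨0, fun h ↦ absurd h hb⟩
  choose ν hν using h_choice
  have h_coord (k : ℕ) : Tendsto (fun b : ℕ → ℝ ↦ b k) u (𝓝 (a k)) :=
    ((continuous_apply k).tendsto a).mono_left hua
  have h_carried : ∀ᶠ b in u, (ν b : Measure ℝ) Kᶜ = 0 :=
    mem_of_superset hu fun b hb ↦ (hν b hb).1
  have h_mass : ∀ᶠ b in u, (ν b).mass ≤ (a 0 + 1).toNNReal := by
    filter_upwards [hu, (h_coord 0).eventually_lt_const (lt_add_one (a 0))] with b hb hlt
    rw [← NNReal.coe_le_coe]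
    refine le_trans (le_of_eq ?_) (hlt.le.trans (Real.le_coe_toNNReal _))
    simpa using (hν b hb).2 0
  obtain ⟨μ, ⟨-, hμK⟩, hμ⟩ := (isCompact_setOfPred_finiteMeasure_le_of_isCompact
    (a 0 + 1).toNNReal hK).ultrafilter_le_nhds (u.map ν) <| le_principal_iff.2 <| mem_map.2 <| by
      filter_upwards [h_mass, h_carried] with b hb hbK
      exact ⟨hb, (FiniteMeasure.null_iff_toMeasure_null _ _).2 hbK⟩
  rw [FiniteMeasure.null_iff_toMeasure_null] at hμK
  refine ⟨μ, inferInstance, hμK, fun k ↦ tendsto_nhds_unique ?_ (h_coord k)⟩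
  refine (tendsto_integral_of_tendsto_of_isCompact hK hμ h_carried hμK
    (continuous_pow k).continuousOn).congr' ?_
  filter_upwards [hu] with b hb using (hν b hb).2 k

theorem IsMomentSeqOn.abs_moment_le {a : ℕ → ℝ} {ρ : ℝ} (ha : IsMomentSeqOn a (Icc (-ρ) ρ))
    (k : ℕ) : |a k| ≤ a 0 * ρ ^ k := by
  obtain ⟨μ, _, hμ, h_moments⟩ := ha
  have h_pow : ∀ᵐ t ∂μ, ‖t ^ k‖ ≤ ρ ^ k := by
    filter_upwards [show ∀ᵐ t ∂μ, t ∈ Icc (-ρ) ρ from hμ] with t ht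
    rw [norm_pow]
    exact pow_le_pow_left₀ (norm_nonneg t) (abs_le.2 ht) k
  calc |a k| ≤ ρ ^ k * μ.real univ := h_moments k ▸ norm_integral_le_of_norm_le_const h_pow
    _ = a 0 * ρ ^ k := by simp [← h_moments 0, mul_comm]

theorem measure_le_abs_eq_zero_of_moment_le {μ : Measure ℝ} [IsFiniteMeasure μ] {C c e : ℝ}
    (hc : 0 ≤ c) (hce : c < e) (hint : ∀ k : ℕ, Integrable (fun t : ℝ ↦ t ^ k) μ)
    (hC : ∀ k : ℕ, ∫ t, t ^ k ∂μ ≤ C * c ^ k) : μ {t | e ≤ |t|} = 0 := by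
  have he : 0 < e := hc.trans_lt hce
  have h_chebyshev (n : ℕ) : μ.real {t | e ≤ |t|} ≤ C * ((c / e) ^ 2) ^ n := by
    have h_subset : {t | e ≤ |t|} ⊆ {t : ℝ | e ^ (2 * n) ≤ t ^ (2 * n)} := fun t ht ↦
      (pow_le_pow_left₀ he.le ht _).trans_eq ((even_two_mul n).pow_abs t)
    have h_markov := mul_meas_ge_le_integral_of_nonneg (μ := μ) (f := fun t : ℝ ↦ t ^ (2 * n))
      (Eventually.of_forall fun t ↦ (even_two_mul n).pow_nonneg t) (hint _) (e ^ (2 * n))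
    rw [← pow_mul, div_pow, mul_div_assoc', le_div_iff₀' (by positivity)]
    calc e ^ (2 * n) * μ.real {t | e ≤ |t|}
        ≤ e ^ (2 * n) * μ.real {t : ℝ | e ^ (2 * n) ≤ t ^ (2 * n)} :=
          mul_le_mul_of_nonneg_left (measureReal_mono h_subset) (by positivity)
      _ ≤ C * c ^ (2 * n) := h_markov.trans (hC _)
  have h_lim : Tendsto (fun n : ℕ ↦ C * ((c / e) ^ 2) ^ n) atTop (𝓝 (C * 0)) :=
    (tendsto_pow_atTop_nhds_zero_of_lt_one (by positivity)
      (pow_lt_one₀ (by positivity) ((div_lt_one he).2 hce) two_ne_zero)).const_mul C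
  rw [mul_zero] at h_lim
  exact (measureReal_eq_zero_iff).1 <|
    le_antisymm (ge_of_tendsto' h_lim h_chebyshev) measureReal_nonneg

theorem isMomentSeqOn_Icc_of_forall_lt {a : ℕ → ℝ} {b : ℝ} (hb : 0 ≤ b)
    (h : ∀ ρ, b < ρ → IsMomentSeqOn a (Icc (-ρ) ρ)) : IsMomentSeqOn a (Icc (-b) b) := by
  obtain ⟨μ, hμ_fin, hμ, h_moments⟩ := h (b + 1) (lt_add_one b)
  have h_tail (e : ℝ) (he : b < e) : μ {t | e ≤ |t|} = 0 := by
    obtain ⟨c, hbc, hce⟩ := exists_between he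
    refine measure_le_abs_eq_zero_of_moment_le (C := a 0) (hb.trans hbc.le) hce
      (fun k ↦ ?_) fun k ↦ ?_
    · exact integrable_of_measure_compl_eq_zero isCompact_Icc hμ (continuous_pow k).continuousOn
    · exact h_moments k ▸ (le_abs_self _).trans ((h c hbc).abs_moment_le k)
  obtain ⟨u, -, hu_gt, hu_lim⟩ := exists_seq_strictAnti_tendsto b
  refine ⟨μ, hμ_fin, measure_mono_null (fun t ht ↦ ?_)
    (measure_iUnion_null fun n ↦ h_tail (u n) (hu_gt n)), h_moments⟩
  have hbt : b < |t| := not_le.1 fun h ↦ ht (abs_le.1 h)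
  obtain ⟨n, hn⟩ := (hu_lim.eventually_lt_const hbt).exists
  exact mem_iUnion.2 ⟨n, hn.le⟩

/-! ### Contour shift from a segment to a lower semicircle -/

theorem exists_ball_between_lower_half_disc_and_half_plane {ε : ℝ} (hε : 0 < ε) (ρ : ℝ) :
    ∃ (c : ℂ) (r : ℝ), {z : ℂ | ‖z‖ ≤ ρ ∧ z.im ≤ 0} ⊆ ball c r ∧ ball c r ⊆ {z | z.im < ε} := by
  set N := ρ ^ 2 / ε
  have hN : 0 ≤ N := by positivity
  have hNε : N * ε = ρ ^ 2 := div_mul_cancel₀ _ hε.ne'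
  refine ⟨-N * Complex.I, N + ε, fun z ⟨hzρ, hz⟩ ↦ ?_, fun z hz ↦ ?_⟩
  · have h_sq : z.re * z.re + z.im * z.im ≤ ρ ^ 2 := by
      rw [← Complex.normSq_apply, ← Complex.sq_norm]
      exact pow_le_pow_left₀ (norm_nonneg z) hzρ 2
    rw [mem_ball, dist_eq_norm]
    refine lt_of_pow_lt_pow_left₀ 2 (by positivity) ?_
    rw [Complex.sq_norm, Complex.normSq_apply]
    simp only [neg_mul, sub_neg_eq_add, Complex.add_re, Complex.re_ofReal_mul, Complex.I_re,
      Complex.add_im, Complex.im_ofReal_mul, Complex.I_im, mul_zero, add_zero, mul_one]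
    nlinarith [mul_nonpos_of_nonneg_of_nonpos hN hz, sq_pos_of_pos hε]
  · rw [mem_ball, dist_eq_norm] at hz
    have h_im : z.im + N ≤ ‖z - -N * Complex.I‖ := by
      simpa using Complex.im_le_norm (z - -N * Complex.I)
    exact lt_of_add_lt_add_right (h_im.trans_lt (hz.trans_eq (add_comm N ε)))

theorem circleMap_zero_im_nonpos {ρ φ : ℝ} (hρ : 0 ≤ ρ) (hφ : φ ∈ Icc (-Real.pi) 0) :
    (circleMap 0 ρ φ).im ≤ 0 := by
  rw [circleMap_zero_im]
  exact mul_nonpos_of_nonneg_of_nonpos hρ (Real.sin_nonpos_of_nonpos_of_neg_pi_le hφ.2 hφ.1)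

theorem integral_ofReal_eq_integral_lower_semicircle {f : ℂ → ℂ} {ε ρ : ℝ} (hε : 0 < ε)
    (hρ : 0 ≤ ρ) (hf : DifferentiableOn ℂ f {z | z.im < ε}) :
    ∫ t in (-ρ)..ρ, f (t : ℂ) =
      ∫ φ in (-Real.pi)..0, f (circleMap 0 ρ φ) * (circleMap 0 ρ φ * Complex.I) := by
  obtain ⟨c, r, h_disc, h_ball⟩ := exists_ball_between_lower_half_disc_and_half_plane hε ρ
  obtain ⟨P, hP⟩ := (hf.mono h_ball).isExactOn_ball
  have h_seg (t : ℝ) (ht : t ∈ uIcc (-ρ) ρ) : (t : ℂ) ∈ ball c r := by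
    rw [uIcc_of_le (neg_le_self hρ)] at ht
    exact h_disc ⟨by simpa using abs_le.2 ht, by simp⟩
  have h_arc (φ : ℝ) (hφ : φ ∈ uIcc (-Real.pi) 0) : circleMap 0 ρ φ ∈ ball c r := by
    rw [uIcc_of_le (neg_nonpos.2 Real.pi_nonneg)] at hφ
    exact h_disc ⟨by simp [abs_of_nonneg hρ], circleMap_zero_im_nonpos hρ hφ⟩
  have hf_cont : ContinuousOn f (ball c r) := hf.continuousOn.mono h_ball
  rw [intervalIntegral.integral_eq_sub_of_hasDerivAt (f := fun t : ℝ ↦ P t)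
      (fun t ht ↦ (hP t (h_seg t ht)).comp_ofReal)
      (hf_cont.comp (by fun_prop) h_seg).intervalIntegrable,
    intervalIntegral.integral_eq_sub_of_hasDerivAt (f := fun φ : ℝ ↦ P (circleMap 0 ρ φ))
      (fun φ hφ ↦ (hP _ (h_arc φ hφ)).comp φ (hasDerivAt_circleMap 0 ρ φ))
      ((hf_cont.comp (by fun_prop) h_arc).mul (by fun_prop)).intervalIntegrable]
  simp [circleMap, Complex.exp_neg]

theorem isMomentSeqOn_lower_semicircle_of_differentiableOn {F : ℂ → ℂ} {ε ρ : ℝ} (hε : 0 < ε)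
    (hρ : 0 ≤ ρ) (hF : DifferentiableOn ℂ F {z | z.im < ε})
    (hF_im : ∀ t : ℝ, 0 ≤ (F t).im) :
    IsMomentSeqOn (fun k ↦ Real.pi⁻¹ *
      (∫ φ in (-Real.pi)..0, circleMap 0 ρ φ ^ (k + 1) * F (circleMap 0 ρ φ)).re)
      (Icc (-ρ) ρ) := by
  have hF_cont : Continuous fun t : ℝ ↦ F t :=
    hF.continuousOn.comp_continuous Complex.continuous_ofReal fun t ↦ by simpa using hε
  convert isMomentSeqOn_density (d := fun t ↦ Real.pi⁻¹ * (F t).im) (neg_le_self hρ)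
    ((Complex.continuous_im.comp hF_cont).const_mul _).continuousOn
    (fun t _ ↦ mul_nonneg (inv_nonneg.2 Real.pi_nonneg) (hF_im t)) using 2 with k
  have h_contour := integral_ofReal_eq_integral_lower_semicircle (f := fun z ↦ z ^ k * F z) hε hρ
    (DifferentiableOn.mul (by fun_prop) hF)
  symm
  calc ∫ t in (-ρ)..ρ, t ^ k * (Real.pi⁻¹ * (F t).im)
      = Real.pi⁻¹ * ∫ t in (-ρ)..ρ, ((t : ℂ) ^ k * F t).im := by
        simp only [← intervalIntegral.integral_const_mul, ← Complex.ofReal_pow,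
          Complex.im_ofReal_mul, mul_left_comm]
    _ = Real.pi⁻¹ * (∫ t in (-ρ)..ρ, (t : ℂ) ^ k * F t).im := by
        congr 1
        exact Complex.imCLM.intervalIntegral_comp_comm
          (((Complex.continuous_ofReal.pow k).mul hF_cont).intervalIntegrable _ _)
    _ = Real.pi⁻¹ *
        (∫ φ in (-Real.pi)..0, circleMap 0 ρ φ ^ (k + 1) * F (circleMap 0 ρ φ)).re := by
        rw [h_contour, ← Complex.I_mul_im, ← intervalIntegral.integral_const_mul]
        congr! 4
        ring

theorem continuousOn_parametric_intervalIntegral {X E : Type*} [TopologicalSpace X]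
    [NormedAddCommGroup E] [NormedSpace ℝ E] {f : X → ℝ → E} {s : Set X} {a b : ℝ}
    (hf : ContinuousOn (Function.uncurry f) (s ×ˢ uIcc a b)) :
    ContinuousOn (fun x ↦ ∫ t in a..b, f x t) s := by
  rw [continuousOn_iff_continuous_domRestrict]
  have h_proj : Continuous (Function.uncurry fun (x : s) t ↦
      f x (projIcc (min a b) (max a b) min_le_max t)) :=
    hf.comp_continuous (f := fun p : s × ℝ ↦
        ((p.1 : X), (projIcc (min a b) (max a b) min_le_max p.2 : ℝ)))
      (by fun_prop) fun p ↦ ⟨p.1.2, (projIcc _ _ min_le_max p.2).2⟩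
  convert intervalIntegral.continuous_parametric_intervalIntegral_of_continuous'
    (μ := volume) h_proj a b using 2 with x
  refine intervalIntegral.integral_congr fun t ht ↦ ?_
  simp only [projIcc_of_mem min_le_max ht]

theorem norm_le_norm_sub_mul_I {z : ℂ} {ε : ℝ} (hε : 0 ≤ ε) (hz : z.im ≤ 0) :
    ‖z‖ ≤ ‖z - ε * Complex.I‖ := by
  refine le_of_sq_le_sq ?_ (norm_nonneg _)
  simp only [Complex.sq_norm, Complex.normSq_apply, Complex.sub_re, Complex.sub_im,
    Complex.re_ofReal_mul, Complex.im_ofReal_mul, Complex.I_re, Complex.I_im, mul_zero, sub_zero,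
    mul_one]
  nlinarith

theorem isMomentSeqOn_lower_semicircle {F : ℂ → ℂ} {ρ : ℝ} (hρ : 0 ≤ ρ)
    (hF : DifferentiableOn ℂ F {z | z.im < 0})
    (hF_cont : ContinuousOn F {z | z.im ≤ 0 ∧ ρ ≤ ‖z‖})
    (hF_im : ∀ z : ℂ, z.im < 0 → 0 ≤ (F z).im) :
    IsMomentSeqOn (fun k ↦ Real.pi⁻¹ *
      (∫ φ in (-Real.pi)..0, circleMap 0 ρ φ ^ (k + 1) * F (circleMap 0 ρ φ)).re)
      (Icc (-ρ) ρ) := by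
  set J : ℕ → ℝ → ℂ := fun k ε ↦
    ∫ φ in (-Real.pi)..0, circleMap 0 ρ φ ^ (k + 1) * F (circleMap 0 ρ φ - ε * Complex.I)
  have hJ_cont (k : ℕ) : ContinuousOn (J k) (Ici 0) := by
    refine continuousOn_parametric_intervalIntegral (ContinuousOn.mul (by fun_prop)
      (hF_cont.comp (by fun_prop) fun ⟨ε, φ⟩ ⟨hε, hφ⟩ ↦ ?_))
    rw [uIcc_of_le (neg_nonpos.2 Real.pi_nonneg)] at hφ
    have h_im := circleMap_zero_im_nonpos hρ hφ
    refine ⟨by simpa using h_im.trans hε, ?_⟩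
    simpa [abs_of_nonneg hρ] using norm_le_norm_sub_mul_I hε h_im
  have hJ_lim : Tendsto (fun ε k ↦ Real.pi⁻¹ * (J k ε).re) (𝓝[>] 0)
      (𝓝 fun k ↦ Real.pi⁻¹ * (J k 0).re) := by
    refine tendsto_pi_nhds.2 fun k ↦ ((Complex.continuous_re.tendsto _).comp ?_).const_mul _
    exact (hJ_cont k 0 self_mem_Ici).mono_left (nhdsWithin_mono _ Ioi_subset_Ici_self)
  have hJ_moment : ∀ᶠ ε in 𝓝[>] 0, IsMomentSeqOn (fun k ↦ Real.pi⁻¹ * (J k ε).re)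
      (Icc (-ρ) ρ) := by
    filter_upwards [self_mem_nhdsWithin] with ε (hε : 0 < ε)
    refine isMomentSeqOn_lower_semicircle_of_differentiableOn
      (F := fun z ↦ F (z - ε * Complex.I)) hε hρ
      (hF.comp (by fun_prop) fun z hz ↦ ?_) fun t ↦ hF_im _ ?_
    · simpa using hz
    · simpa using hε
  simpa [J] using (isClosed_setOf_isMomentSeqOn isCompact_Icc).mem_of_tendsto hJ_lim hJ_moment

/-! ### Taylor coefficients and Schwarz reflection -/

theorem circleAverage_div_pow_eq_iteratedDeriv {f : ℂ → ℂ} {s : ℝ} (hs : 0 < s)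
    (hf : DifferentiableOn ℂ f (closedBall 0 s)) (n : ℕ) :
    Real.circleAverage (fun w ↦ f w / w ^ n) 0 s = iteratedDeriv n f 0 / n.factorial := by
  have h_cauchy := hf.circleIntegral_one_div_sub_center_pow_smul hs n
  have h_integrand (w : ℂ) : (w - 0)⁻¹ • (f w / w ^ n) = (1 / (w - 0) ^ (n + 1)) • f w := by
    simp only [sub_zero, smul_eq_mul, pow_succ, mul_inv, div_eq_mul_inv]
    ring
  simp only [Real.circleAverage_eq_circleIntegral hs.ne', h_integrand]
  rw [h_cauchy, smul_eq_mul, smul_eq_mul]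
  field_simp [Complex.two_pi_I_ne_zero]

theorem re_circleAverage_eq_of_conj_symm {f : ℂ → ℂ} {s : ℝ}
    (hf : ContinuousOn f (sphere 0 |s|))
    (hf_conj : ∀ w ∈ sphere 0 |s|, f (conj w) = conj (f w)) :
    (Real.circleAverage f 0 s).re =
      Real.pi⁻¹ * (∫ φ in 0..Real.pi, f (circleMap 0 s φ)).re := by
  have h_cont : Continuous fun φ ↦ f (circleMap 0 s φ) :=
    hf.comp_continuous (by fun_prop) (circleMap_mem_sphere' 0 s)
  have h_lower : ∫ φ in (-Real.pi)..0, f (circleMap 0 s φ) =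
      conj (∫ φ in 0..Real.pi, f (circleMap 0 s φ)) := by
    rw [← intervalIntegral.intervalIntegral_conj]
    simp only [← hf_conj _ (circleMap_mem_sphere' 0 s _), conj_circleMap_zero]
    rw [intervalIntegral.integral_comp_neg fun φ ↦ f (circleMap 0 s φ), neg_zero]
  have h_average : Real.circleAverage f 0 s =
      (2 * Real.pi)⁻¹ • ∫ φ in (-Real.pi)..Real.pi, f (circleMap 0 s φ) := by
    rw [Real.circleAverage_eq_integral_add (-Real.pi),
      intervalIntegral.integral_comp_add_right (fun φ ↦ f (circleMap 0 s φ))]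
    ring_nf
  rw [h_average, ← intervalIntegral.integral_add_adjacent_intervals
    (h_cont.intervalIntegrable _ 0) (h_cont.intervalIntegrable 0 _), h_lower, Complex.smul_re,
    Complex.add_re, Complex.conj_re, smul_eq_mul]
  ring

/-- The extension of `f` from the closed upper half plane to the lower half plane by
`z ↦ conj (f (conj z))`, as in the Schwarz reflection principle. -/
def schwarzReflection (f : ℂ → ℂ) (z : ℂ) : ℂ :=
  if 0 ≤ z.im then f z else conj (f (conj z))

namespace schwarzReflection

variable {f : ℂ → ℂ}

theorem eq_of_im_nonneg {z : ℂ} (hz : 0 ≤ z.im) : schwarzReflection f z = f z := if_pos hz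

theorem eq_of_im_neg {z : ℂ} (hz : z.im < 0) : schwarzReflection f z = conj (f (conj z)) :=
  if_neg hz.not_ge

theorem map_conj {z : ℂ} (hf : z.im = 0 → (f z).im = 0) :
    schwarzReflection f (conj z) = conj (schwarzReflection f z) := by
  rcases lt_trichotomy z.im 0 with hz | hz | hz
  · rw [eq_of_im_neg hz, eq_of_im_nonneg (by simpa using hz.le), Complex.conj_conj]
  · rw [Complex.conj_eq_iff_im.2 hz, eq_of_im_nonneg hz.ge, Complex.conj_eq_iff_im.2 (hf hz)]
  · rw [eq_of_im_nonneg hz.le, eq_of_im_neg (by simpa using hz), Complex.conj_conj]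

theorem eventuallyEq_nhds_ofReal {t : ℝ} (hf : AnalyticAt ℂ f t)
    (hf_real : ∀ᶠ s : ℝ in 𝓝 t, (f s).im = 0) : schwarzReflection f =ᶠ[𝓝 (t : ℂ)] f := by
  have h_conj : Tendsto conj (𝓝 (t : ℂ)) (𝓝 (t : ℂ)) := by
    simpa using Complex.continuous_conj.tendsto (t : ℂ)
  have hf_conj : AnalyticAt ℂ (fun z ↦ conj (f (conj z))) t := by
    rw [Complex.analyticAt_iff_eventually_differentiableAt] at hf ⊢
    filter_upwards [h_conj.eventually hf] with z hz
    simpa [Function.comp_def] using hz.conj_conj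
  have h_real_line : Tendsto (fun s : ℝ ↦ (s : ℂ)) (𝓝[≠] t) (𝓝[≠] (t : ℂ)) :=
    Complex.continuous_ofReal.continuousWithinAt.tendsto_nhdsWithin
      fun _ ↦ Complex.ofReal_injective.ne
  have h_freq : ∃ᶠ z in 𝓝[≠] (t : ℂ), f z = conj (f (conj z)) := by
    refine h_real_line.frequently (Eventually.frequently ?_)
    filter_upwards [nhdsWithin_le_nhds hf_real] with s hs
    rw [Complex.conj_ofReal, Complex.conj_eq_iff_im.2 hs]
  filter_upwards [(hf.frequently_eq_iff_eventually_eq hf_conj).1 h_freq] with z hz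
  simp only [schwarzReflection, ← hz, ite_self]

theorem differentiableOn {U : Set ℂ} (hU : IsOpen U) (hU_conj : ∀ z ∈ U, conj z ∈ U)
    (hf : ∀ z ∈ U, 0 ≤ z.im → AnalyticAt ℂ f z)
    (hf_real : ∀ t : ℝ, (t : ℂ) ∈ U → (f t).im = 0) :
    DifferentiableOn ℂ (schwarzReflection f) U := by
  intro z hzU
  refine DifferentiableAt.differentiableWithinAt ?_
  rcases lt_trichotomy z.im 0 with hz | hz | hz
  · have h_eq : schwarzReflection f =ᶠ[𝓝 z] conj ∘ f ∘ conj := by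
      filter_upwards [Complex.continuous_im.continuousAt.eventually_lt_const hz] with w hw
      exact eq_of_im_neg hw
    rw [h_eq.differentiableAt_iff, ← Complex.conj_conj z]
    exact (hf _ (hU_conj z hzU) (by simpa using hz.le)).differentiableAt.conj_conj
  · obtain ⟨t, rfl⟩ : ∃ t : ℝ, (t : ℂ) = z := ⟨z.re, Complex.ext rfl hz.symm⟩
    have h_real : ∀ᶠ s : ℝ in 𝓝 t, (f s).im = 0 := by
      filter_upwards [Complex.continuous_ofReal.continuousAt.eventually_mem (hU.mem_nhds hzU)]
        with s hs using hf_real s hs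
    have hft := hf t hzU hz.ge
    exact (eventuallyEq_nhds_ofReal hft h_real).differentiableAt_iff.2 hft.differentiableAt
  · have h_eq : schwarzReflection f =ᶠ[𝓝 z] f := by
      filter_upwards [Complex.continuous_im.continuousAt.eventually_const_lt hz] with w hw
      exact eq_of_im_nonneg hw.le
    exact h_eq.differentiableAt_iff.2 (hf z hzU hz.le).differentiableAt

end schwarzReflection

theorem re_iteratedDeriv_div_factorial_eq_integral_upper_semicircle {G : ℂ → ℂ} {r s : ℝ}
    (hs : 0 < s) (hsr : s < r) (hG : ∀ w : ℂ, ‖w‖ < r → 0 ≤ w.im → AnalyticAt ℂ G w)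
    (hG_real : ∀ t : ℝ, |t| < r → (G t).im = 0) (n : ℕ) :
    (iteratedDeriv n G 0).re / n.factorial =
      Real.pi⁻¹ * (∫ φ in 0..Real.pi, G (circleMap 0 s φ) / circleMap 0 s φ ^ n).re := by
  set L := schwarzReflection G
  have hL : DifferentiableOn ℂ L (ball 0 r) :=
    schwarzReflection.differentiableOn isOpen_ball (by simp)
      (fun w hw ↦ hG w (mem_ball_zero_iff.1 hw)) (by simpa using hG_real)
  have hL_conj (w : ℂ) (hw : ‖w‖ < r) : L (conj w) = conj (L w) := by
    refine schwarzReflection.map_conj fun him ↦ ?_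
    obtain ⟨t, rfl⟩ : ∃ t : ℝ, (t : ℂ) = w := ⟨w.re, Complex.ext rfl him.symm⟩
    exact hG_real t (by simpa using hw)
  have hLG : L =ᶠ[𝓝 0] G := by
    have hr : 0 < r := hs.trans hsr
    refine schwarzReflection.eventuallyEq_nhds_ofReal (t := 0) (hG 0 (by simpa) le_rfl) ?_
    filter_upwards [ball_mem_nhds 0 hr] with t ht using hG_real t (by simpa using ht)
  have h_norm {w : ℂ} (hw : w ∈ sphere (0 : ℂ) |s|) : ‖w‖ < r := by
    rw [mem_sphere_zero_iff_norm.1 hw, abs_of_pos hs]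
    exact hsr
  have h_average := re_circleAverage_eq_of_conj_symm (f := fun w ↦ L w / w ^ n) (s := s)
    ((hL.continuousOn.mono fun w hw ↦ mem_ball_zero_iff.2 (h_norm hw)).div (by fun_prop)
      fun w hw ↦ pow_ne_zero n ?_)
    fun w hw ↦ by rw [hL_conj w (h_norm hw), map_div₀, map_pow]
  · rw [circleAverage_div_pow_eq_iteratedDeriv hs (hL.mono (closedBall_subset_ball hsr)),
      hLG.iteratedDeriv_eq, Complex.div_natCast_re] at h_average
    rw [h_average]
    congr 2
    refine intervalIntegral.integral_congr fun φ hφ ↦ ?_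
    rw [uIcc_of_le Real.pi_nonneg] at hφ
    have h_im : 0 ≤ (circleMap 0 s φ).im := by
      rw [circleMap_zero_im]
      exact mul_nonneg hs.le (Real.sin_nonneg_of_mem_Icc hφ)
    simp only [L, schwarzReflection.eq_of_im_nonneg h_im]
  · exact ne_of_mem_sphere hw (abs_pos.2 hs.ne').ne'

theorem iteratedDeriv_re_ofReal_of_analyticAt {G : ℂ → ℂ} (n : ℕ) {t : ℝ} (hG : AnalyticAt ℂ G t) :
    iteratedDeriv n (fun s : ℝ ↦ (G s).re) t = (iteratedDeriv n G t).re := by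
  induction n generalizing t with
  | zero => simp only [iteratedDeriv_zero]
  | succ n ih =>
    have h_near : iteratedDeriv n (fun s : ℝ ↦ (G s).re) =ᶠ[𝓝 t]
        fun s ↦ (iteratedDeriv n G s).re := by
      filter_upwards [Complex.continuous_ofReal.continuousAt.eventually
        hG.eventually_analyticAt] with s hs using ih hs
    have hG_deriv : DifferentiableAt ℂ (iteratedDeriv n G) t := by
      rw [iteratedDeriv_eq_iterate]
      exact (hG.iterated_deriv n).differentiableAt
    rw [iteratedDeriv_succ, iteratedDeriv_succ, h_near.deriv_eq,
      hG_deriv.hasDerivAt.real_of_complex.deriv]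

/-- A Pick function: `G` is holomorphic on the open upper half plane with nonnegative imaginary
part there, and it continues analytically across the real interval `(-r, r)`, on which it is
real. -/
structure IsPick (r : ℝ) (G : ℂ → ℂ) : Prop where
  analyticAt_of_im_pos : ∀ w : ℂ, 0 < w.im → AnalyticAt ℂ G w
  im_nonneg : ∀ w : ℂ, 0 < w.im → 0 ≤ (G w).im
  analyticAt_ofReal : ∀ t : ℝ, |t| < r → AnalyticAt ℂ G t
  im_ofReal : ∀ t : ℝ, |t| < r → (G t).im = 0

namespace IsPick

variable {r : ℝ} {G : ℂ → ℂ}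

theorem analyticAt_of_norm_lt (hG : IsPick r G) {w : ℂ} (hw : ‖w‖ < r) (hw_im : 0 ≤ w.im) :
    AnalyticAt ℂ G w := by
  rcases hw_im.lt_or_eq with h | h
  · exact hG.analyticAt_of_im_pos w h
  · obtain ⟨t, rfl⟩ : ∃ t : ℝ, (t : ℂ) = w := ⟨w.re, Complex.ext rfl h⟩
    exact hG.analyticAt_ofReal t (by simpa using hw)

theorem isMomentSeqOn_of_inv_lt (hG : IsPick r G) (hr : 0 < r) {ρ : ℝ} (hρ : r⁻¹ < ρ) :
    IsMomentSeqOn (fun k ↦ (iteratedDeriv (k + 1) G 0).re / (k + 1).factorial)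
      (Icc (-ρ) ρ) := by
  have hρ_pos : 0 < ρ := (inv_pos.2 hr).trans hρ
  have hρr : ρ⁻¹ < r := inv_lt_of_inv_lt₀ hr hρ
  have h_ne {z : ℂ} (hz : z.im < 0) : z ≠ 0 := by
    rintro rfl
    exact hz.ne rfl
  have h_inv_pos {z : ℂ} (hz : z.im < 0) : 0 < z⁻¹.im := by
    rw [Complex.inv_im]
    exact div_pos (neg_pos.2 hz) (Complex.normSq_pos.2 (h_ne hz))
  have h_inv_nonneg {z : ℂ} (hz : z.im ≤ 0) : 0 ≤ z⁻¹.im := by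
    rw [Complex.inv_im]
    exact div_nonneg (neg_nonneg.2 hz) (Complex.normSq_nonneg z)
  have hG_inv_diff : DifferentiableOn ℂ (fun z ↦ G z⁻¹) {z | z.im < 0} := fun z hz ↦
    ((hG.analyticAt_of_im_pos _ (h_inv_pos hz)).differentiableAt.comp z
      (differentiableAt_inv (h_ne hz))).differentiableWithinAt
  have hG_inv_cont : ContinuousOn (fun z ↦ G z⁻¹) {z | z.im ≤ 0 ∧ ρ ≤ ‖z‖} := by
    rintro z ⟨hz_im, hz_norm⟩
    have h_lt : ‖z⁻¹‖ < r := by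
      rw [norm_inv]
      exact (inv_anti₀ hρ_pos hz_norm).trans_lt hρr
    exact ((hG.analyticAt_of_norm_lt h_lt (h_inv_nonneg hz_im)).continuousAt.comp
      (continuousAt_inv₀ (norm_pos_iff.1 (hρ_pos.trans_le hz_norm)))).continuousWithinAt
  convert isMomentSeqOn_lower_semicircle hρ_pos.le hG_inv_diff hG_inv_cont
    (fun z hz ↦ hG.im_nonneg _ (h_inv_pos hz)) using 2 with k
  have h_reflect := intervalIntegral.integral_comp_neg (a := -Real.pi) (b := 0)
    fun φ ↦ G (circleMap 0 ρ⁻¹ φ) / circleMap 0 ρ⁻¹ φ ^ (k + 1)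
  rw [neg_zero, neg_neg] at h_reflect
  rw [re_iteratedDeriv_div_factorial_eq_integral_upper_semicircle (inv_pos.2 hρ_pos) hρr
    (fun w ↦ hG.analyticAt_of_norm_lt) hG.im_ofReal, ← h_reflect]
  simp only [← circleMap_zero_inv, inv_pow, div_inv_eq_mul, mul_comm]

theorem isMomentSeqOn (hG : IsPick r G) (hr : 0 < r) :
    IsMomentSeqOn (fun k ↦ (iteratedDeriv (k + 1) G 0).re / (k + 1).factorial)
      (Icc (-r⁻¹) r⁻¹) :=
  isMomentSeqOn_Icc_of_forall_lt (inv_pos.2 hr).le fun _ ↦ hG.isMomentSeqOn_of_inv_lt hr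

end IsPick

/-! ### The complexification of `gR` -/

/-- The continuation of `gR R` to the complex plane cut along `[R / π, ∞)`. It maps the upper half
plane onto the strip `0 < im z < R`. -/
def complexGR (R : ℝ) (w : ℂ) : ℂ :=
  -(R / Real.pi : ℝ) * Complex.log (1 - (Real.pi / R : ℝ) * w)

namespace complexGR

variable {R : ℝ}

theorem one_sub_pos (hR : 0 < R) {t : ℝ} (ht : |t| < R / Real.pi) : 0 < 1 - Real.pi / R * t := by
  rw [sub_pos, ← inv_div, inv_mul_lt_iff₀ (by positivity), mul_one]
  exact (abs_lt.1 ht).2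

theorem one_sub_im_neg (hR : 0 < R) {w : ℂ} (hw : 0 < w.im) :
    (1 - (Real.pi / R : ℝ) * w : ℂ).im < 0 := by
  rw [Complex.sub_im, Complex.one_im, Complex.im_ofReal_mul, zero_sub, neg_lt_zero]
  positivity

theorem analyticAt {w : ℂ} (hw : 1 - (Real.pi / R : ℝ) * w ∈ Complex.slitPlane) :
    AnalyticAt ℂ (complexGR R) w := by
  unfold complexGR
  fun_prop (disch := exact hw)

theorem analyticAt_of_im_pos (hR : 0 < R) {w : ℂ} (hw : 0 < w.im) :
    AnalyticAt ℂ (complexGR R) w :=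
  analyticAt (Or.inr (one_sub_im_neg hR hw).ne)

theorem analyticAt_ofReal (hR : 0 < R) {t : ℝ} (ht : |t| < R / Real.pi) :
    AnalyticAt ℂ (complexGR R) t :=
  analyticAt (by exact_mod_cast Complex.ofReal_mem_slitPlane.2 (one_sub_pos hR ht))

theorem eq_gR (hR : 0 < R) {t : ℝ} (ht : |t| < R / Real.pi) :
    complexGR R t = gR R t := by
  rw [gR, Complex.ofReal_mul, Complex.ofReal_log (one_sub_pos hR ht).le]
  simp [complexGR]

theorem im_eq (w : ℂ) :
    (complexGR R w).im = R / Real.pi * -(1 - (Real.pi / R : ℝ) * w : ℂ).arg := by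
  rw [complexGR, ← Complex.ofReal_neg, Complex.im_ofReal_mul, Complex.log_im, neg_mul_comm]

theorem im_pos (hR : 0 < R) {w : ℂ} (hw : 0 < w.im) : 0 < (complexGR R w).im := by
  rw [im_eq]
  exact mul_pos (by positivity) (neg_pos.2 (Complex.arg_neg_iff.2 (one_sub_im_neg hR hw)))

theorem im_lt (hR : 0 < R) (w : ℂ) : (complexGR R w).im < R := by
  rw [im_eq, ← lt_div_iff₀' (by positivity), div_div_cancel₀ hR.ne', neg_lt]
  exact Complex.neg_pi_lt_arg _

theorem isPick_comp (hR : 0 < R) {K : ℂ → ℂ}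
    (hK : ∀ z : ℂ, 0 ≤ z.im → z.im < R → AnalyticAt ℂ K z) (hK_real : ∀ t : ℝ, (K t).im = 0)
    (hK_im : ∀ z : ℂ, 0 < z.im → z.im < R → 0 ≤ (K z).im) (x : ℝ) :
    IsPick (R / Real.pi) fun w ↦ K (x + complexGR R w) where
  analyticAt_of_im_pos w hw := by
    refine (hK _ ?_ ?_).comp (analyticAt_const.add (analyticAt_of_im_pos hR hw))
    · simpa using (im_pos hR hw).le
    · simpa using im_lt hR w
  im_nonneg w hw := by
    refine hK_im _ ?_ ?_
    · simpa using im_pos hR hw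
    · simpa using im_lt hR w
  analyticAt_ofReal t ht := by
    refine (hK _ ?_ ?_).comp (analyticAt_const.add (analyticAt_ofReal hR ht))
    · simp [eq_gR hR ht]
    · simpa [eq_gR hR ht] using hR
  im_ofReal t ht := by
    rw [eq_gR hR ht]
    exact_mod_cast hK_real (x + gR R t)

end complexGR

/-! ### Solutions and Wronskians -/

namespace IsSolution

variable {θ f : ℝ → ℝ}

theorem hasDerivAt (hf : IsSolution θ f) (t : ℝ) : HasDerivAt f (deriv f t) t :=
  (hf.1.differentiable (by simp) t).hasDerivAt

theorem hasDerivAt_deriv (hf : IsSolution θ f) (t : ℝ) :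
    HasDerivAt (deriv f) (-(θ t * f t)) t := by
  rw [← eq_neg_of_add_eq_zero_left (hf.2 t)]
  exact ((contDiff_infty_iff_deriv.1 hf.1).2.differentiable (by simp) t).hasDerivAt

theorem hasDerivAt_sq (hf : IsSolution θ f) (t : ℝ) :
    HasDerivAt (fun s ↦ f s ^ 2) (2 * (f t * deriv f t)) t :=
  ((hf.hasDerivAt t).pow 2).congr_deriv (by ring)

theorem convexOn_sq (hf : IsSolution θ f) (hθ : ∀ t, θ t ≤ 0) :
    ConvexOn ℝ univ fun t ↦ f t ^ 2 := by
  refine Monotone.convexOn_univ_of_deriv (fun t ↦ (hf.hasDerivAt_sq t).differentiableAt) ?_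
  have hderiv : deriv (fun t ↦ f t ^ 2) = fun t ↦ 2 * (f t * deriv f t) :=
    funext fun t ↦ (hf.hasDerivAt_sq t).deriv
  have hderiv₂ (t : ℝ) : HasDerivAt (fun t ↦ 2 * (f t * deriv f t))
      (2 * (deriv f t ^ 2 + -θ t * f t ^ 2)) t :=
    (((hf.hasDerivAt t).mul (hf.hasDerivAt_deriv t)).const_mul 2).congr_deriv (by ring)
  rw [hderiv]
  refine monotone_of_hasDerivAt_nonneg hderiv₂ fun t ↦ ?_
  have := neg_nonneg.2 (hθ t)
  simp only [Pi.zero_apply]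
  positivity

theorem ne_zero_of_nonpos (hf : IsSolution θ f) (hθ : ∀ t, θ t ≤ 0) {x : ℝ} (hx : f x ≠ 0)
    (hx' : deriv f x = 0) (t : ℝ) : f t ≠ 0 := by
  have hcrit : HasDerivAt (fun s ↦ f s ^ 2) 0 x := by simpa [hx'] using hf.hasDerivAt_sq x
  have hmin : f x ^ 2 ≤ f t ^ 2 :=
    (hf.convexOn_sq hθ).isMinOn_of_rightDeriv_eq_zero (by simp)
      (hcrit.hasDerivWithinAt.derivWithin (uniqueDiffWithinAt_Ioi x)) (mem_univ t)
  exact pow_ne_zero_iff two_ne_zero |>.1 ((sq_pos_of_ne_zero hx).trans_le hmin).ne'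

end IsSolution

/-- The Wronskian `f g' - f' g`. -/
def wronskian (f g : ℝ → ℝ) (t : ℝ) : ℝ := f t * deriv g t - deriv f t * g t

theorem wronskian_eq_wronskian {θ f g : ℝ → ℝ} (hf : IsSolution θ f) (hg : IsSolution θ g)
    (s t : ℝ) : wronskian f g s = wronskian f g t := by
  have hW (u : ℝ) : HasDerivAt (wronskian f g) 0 u :=
    (((hf.hasDerivAt u).mul (hg.hasDerivAt_deriv u)).sub
      ((hf.hasDerivAt_deriv u).mul (hg.hasDerivAt u))).congr_deriv (by ring)
  exact is_const_of_deriv_eq_zero (fun u ↦ (hW u).differentiableAt) (fun u ↦ (hW u).deriv) s t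

theorem IsSolution.wronskian_mul_eq {θ f φ₁ φ₂ : ℝ → ℝ} (hf : IsSolution θ f)
    (hφ₁ : IsSolution θ φ₁) (hφ₂ : IsSolution θ φ₂) (x t : ℝ) :
    wronskian φ₁ φ₂ x * f t = wronskian f φ₂ x * φ₁ t + wronskian φ₁ f x * φ₂ t := by
  rw [wronskian_eq_wronskian hφ₁ hφ₂ x t, wronskian_eq_wronskian hf hφ₂ x t,
    wronskian_eq_wronskian hφ₁ hf x t]
  unfold wronskian
  ring

theorem IsSolution.eventually_ne_zero {θ φ₁ φ₂ : ℝ → ℝ} (hφ₁ : IsSolution θ φ₁) {t : ℝ}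
    (hW : wronskian φ₁ φ₂ t ≠ 0) (ht : φ₁ t = 0) : ∀ᶠ s in 𝓝[≠] t, φ₁ s ≠ 0 := by
  refine (hφ₁.hasDerivAt t).eventually_ne fun h ↦ hW ?_
  rw [wronskian, ht, h, zero_mul, zero_mul, sub_zero]

/-! ### Möbius transformations of meromorphic ratios -/

section mobius

variable {α β γ δ : ℝ}

theorem mobius_denom_ne_zero {w : ℂ} (hw : (α * δ - β * γ) * w.im ≠ 0) : α + β * w ≠ 0 := by
  intro h
  have him : β * w.im = 0 := by simpa using congrArg Complex.im h
  have hβ : β = 0 := (mul_eq_zero.1 him).resolve_right (right_ne_zero_of_mul hw)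
  have hα : α = 0 := by simpa [hβ] using h
  simp [hα, hβ] at hw

theorem mobius_im (w : ℂ) : ((γ + δ * w) / (α + β * w)).im =
    (α * δ - β * γ) * w.im / Complex.normSq (α + β * w) := by
  rw [Complex.div_im, ← sub_div]
  congr 1
  simp only [Complex.add_im, Complex.add_re, Complex.ofReal_im, Complex.ofReal_re,
    Complex.im_ofReal_mul, Complex.re_ofReal_mul]
  ring

theorem eventually_cobounded_add_mul_ne_zero {𝕜 : Type*} [NormedField 𝕜] (a : 𝕜) {b : 𝕜}
    (hb : b ≠ 0) : ∀ᶠ w in Bornology.cobounded 𝕜, a + b * w ≠ 0 := by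
  filter_upwards [Bornology.eventually_ne_cobounded (-(b⁻¹ * a))] with w hw h
  exact hw (by rw [eq_neg_iff_add_eq_zero]; field_simp; linear_combination h)

theorem tendsto_mobius_cobounded {𝕜 : Type*} [NormedField 𝕜] (a c d : 𝕜) {b : 𝕜} (hb : b ≠ 0) :
    Tendsto (fun w ↦ (c + d * w) / (a + b * w)) (Bornology.cobounded 𝕜) (𝓝 (d / b)) := by
  have hlim (p q : 𝕜) : Tendsto (fun w ↦ p * w⁻¹ + q) (Bornology.cobounded 𝕜) (𝓝 q) := by
    simpa using (tendsto_inv₀_cobounded.const_mul p).add_const q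
  refine ((hlim c d).div (hlim a b) hb).congr' ?_
  filter_upwards [Bornology.eventually_ne_cobounded (0 : 𝕜)] with w hw
  rw [Pi.div_apply, ← mul_div_mul_right _ _ hw]
  congr 1 <;> field_simp

end mobius

/-- The strip `|im z| < R` without the real zeros of `φ`. -/
def puncturedStrip (R : ℝ) (φ : ℝ → ℝ) : Set ℂ :=
  {z | |z.im| < R ∧ ∀ t : ℝ, φ t = 0 → z ≠ t}

/-- `H` is a meromorphic extension of `φ₂ / φ₁` to the strip `|im z| < R` whose poles are the zeros
of `φ₁`, all of which are isolated. -/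
structure IsStripExtension (R : ℝ) (φ₁ φ₂ : ℝ → ℝ) (H : ℂ → ℂ) : Prop where
  continuous : Continuous φ₁
  eventually_ne_zero : ∀ t, φ₁ t = 0 → ∀ᶠ s in 𝓝[≠] t, φ₁ s ≠ 0
  eq_div : ∀ t : ℝ, φ₁ t ≠ 0 → H t = ((φ₂ t / φ₁ t : ℝ) : ℂ)
  differentiableOn : DifferentiableOn ℂ H (puncturedStrip R φ₁)
  tendsto_norm : ∀ t : ℝ, φ₁ t = 0 → Tendsto (fun z ↦ ‖H z‖) (𝓝[≠] (t : ℂ)) atTop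

theorem isOpen_puncturedStrip (R : ℝ) {φ : ℝ → ℝ} (hφ : Continuous φ) :
    IsOpen (puncturedStrip R φ) := by
  have hset : puncturedStrip R φ = {z | |z.im| < R} ∩ (((↑) : ℝ → ℂ) '' (φ ⁻¹' {0}))ᶜ := by
    ext z
    simp [puncturedStrip, eq_comm]
  rw [hset]
  have hzeros : IsClosed (((↑) : ℝ → ℂ) '' (φ ⁻¹' {0})) :=
    Complex.isometry_ofReal.isClosedEmbedding.isClosedMap _ (isClosed_singleton.preimage hφ)
  exact (isOpen_lt (by fun_prop) continuous_const).inter hzeros.isOpen_compl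

theorem mem_puncturedStrip_of_im_pos {R : ℝ} (φ : ℝ → ℝ) {z : ℂ} (h₀ : 0 < z.im) (hR : z.im < R) :
    z ∈ puncturedStrip R φ := by
  refine ⟨by rwa [abs_of_pos h₀], fun t _ hz ↦ ?_⟩
  simp [hz] at h₀

theorem ofReal_mem_puncturedStrip {R : ℝ} (hR : 0 < R) {φ : ℝ → ℝ} {t : ℝ} (ht : φ t ≠ 0) :
    (t : ℂ) ∈ puncturedStrip R φ := by
  refine ⟨by simpa using hR, fun s hs h ↦ ht ?_⟩
  rwa [Complex.ofReal_inj.1 h]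

theorem puncturedStrip_mem_nhdsNE {R : ℝ} (hR : 0 < R) {φ : ℝ → ℝ} {t : ℝ}
    (ht : ∀ᶠ s in 𝓝[≠] t, φ s ≠ 0) : puncturedStrip R φ ∈ 𝓝[≠] (t : ℂ) := by
  rw [eventually_nhdsWithin_iff] at ht
  have hre := (Complex.continuous_re.tendsto (t : ℂ)).eventually ht
  have him : ∀ᶠ z : ℂ in 𝓝 (t : ℂ), |z.im| < R :=
    (isOpen_lt (by fun_prop) continuous_const).mem_nhds (by simpa using hR)
  filter_upwards [nhdsWithin_le_nhds hre, nhdsWithin_le_nhds him, self_mem_nhdsWithin]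
    with z hz hzR hzt
  refine ⟨hzR, ?_⟩
  rintro s hs rfl
  exact hz (by simpa using hzt) hs

/-- The extension of `(γ φ₁ + δ φ₂) / (α φ₁ + β φ₂)` off the real axis built from an extension `H`
of `φ₂ / φ₁`. Using the real quotient on the axis gives the correct value at the poles of `H`. -/
def mobiusExtension (α β γ δ : ℝ) (φ₁ φ₂ : ℝ → ℝ) (H : ℂ → ℂ) (z : ℂ) : ℂ :=
  if z.im = 0 then
    (((γ * φ₁ z.re + δ * φ₂ z.re) / (α * φ₁ z.re + β * φ₂ z.re) : ℝ) : ℂ)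
  else (γ + δ * H z) / (α + β * H z)

namespace mobiusExtension

variable {R α β γ δ : ℝ} {φ₁ φ₂ : ℝ → ℝ} {H : ℂ → ℂ}

theorem ofReal (t : ℝ) : mobiusExtension α β γ δ φ₁ φ₂ H t =
    (((γ * φ₁ t + δ * φ₂ t) / (α * φ₁ t + β * φ₂ t) : ℝ) : ℂ) := by
  simp [mobiusExtension]

theorem im_pos {z : ℂ} (hz : z.im ≠ 0) (hH_im : 0 < (α * δ - β * γ) * (H z).im) :
    0 < (mobiusExtension α β γ δ φ₁ φ₂ H z).im := by
  rw [mobiusExtension, if_neg hz, mobius_im]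
  exact div_pos hH_im (Complex.normSq_pos.2 (mobius_denom_ne_zero hH_im.ne'))

theorem add_mul_eq_div (hH : IsStripExtension R φ₁ φ₂ H) (a b : ℝ) {t : ℝ} (ht : φ₁ t ≠ 0) :
    a + b * H t = (((a * φ₁ t + b * φ₂ t) / φ₁ t : ℝ) : ℂ) := by
  rw [hH.eq_div t ht]
  norm_cast
  field_simp

theorem eqOn (hH : IsStripExtension R φ₁ φ₂ H) :
    EqOn (mobiusExtension α β γ δ φ₁ φ₂ H) (fun z ↦ (γ + δ * H z) / (α + β * H z))
      (puncturedStrip R φ₁) := by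
  intro z hz
  by_cases him : z.im = 0
  · lift z to ℝ using him
    have ht : φ₁ z ≠ 0 := fun h ↦ hz.2 z h rfl
    simp only [ofReal, add_mul_eq_div hH _ _ ht]
    rw [← Complex.ofReal_div, div_div_div_cancel_right₀ ht]
  · exact if_neg him

theorem analyticAt_of_mem (hH : IsStripExtension R φ₁ φ₂ H) {z : ℂ}
    (hz : z ∈ puncturedStrip R φ₁) (hden : α + β * H z ≠ 0) :
    AnalyticAt ℂ (mobiusExtension α β γ δ φ₁ φ₂ H) z := by
  have hΩ : puncturedStrip R φ₁ ∈ 𝓝 z := (isOpen_puncturedStrip R hH.continuous).mem_nhds hz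
  have hHz : AnalyticAt ℂ H z := hH.differentiableOn.analyticAt hΩ
  have hM : AnalyticAt ℂ (fun z ↦ (γ + δ * H z) / (α + β * H z)) z :=
    AnalyticAt.div (by fun_prop) (by fun_prop) hden
  exact hM.congr ((eqOn hH).symm.eventuallyEq_of_mem hΩ)

theorem analyticAt_of_eq_zero (hR : 0 < R) (hH : IsStripExtension R φ₁ φ₂ H) {t : ℝ}
    (ht : φ₁ t = 0) (hden : α * φ₁ t + β * φ₂ t ≠ 0) :
    AnalyticAt ℂ (mobiusExtension α β γ δ φ₁ φ₂ H) t := by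
  rw [ht, mul_zero, zero_add] at hden
  have hβ : (β : ℂ) ≠ 0 := Complex.ofReal_ne_zero.2 (left_ne_zero_of_mul hden)
  have hpole : Tendsto H (𝓝[≠] (t : ℂ)) (Bornology.cobounded ℂ) :=
    tendsto_norm_atTop_iff_cobounded.1 (hH.tendsto_norm t ht)
  have hΩ := puncturedStrip_mem_nhdsNE hR (hH.eventually_ne_zero t ht)
  have hval : mobiusExtension α β γ δ φ₁ φ₂ H t = δ / β := by
    rw [ofReal, ht, mul_zero, mul_zero, zero_add, zero_add,
      mul_div_mul_right _ _ (right_ne_zero_of_mul hden), Complex.ofReal_div]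
  refine Complex.analyticAt_of_differentiable_on_punctured_nhds_of_continuousAt ?_ ?_
  · filter_upwards [hΩ, hpole.eventually (eventually_cobounded_add_mul_ne_zero (α : ℂ) hβ)]
      with z hz hz_den using (analyticAt_of_mem hH hz hz_den).differentiableAt
  · rw [continuousAt_iff_punctured_nhds, hval]
    exact ((tendsto_mobius_cobounded (α : ℂ) γ δ hβ).comp hpole).congr'
      ((eqOn hH).symm.eventuallyEq_of_mem hΩ)

theorem analyticAt (hR : 0 < R) (hH : IsStripExtension R φ₁ φ₂ H)
    (hden : ∀ t, α * φ₁ t + β * φ₂ t ≠ 0)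
    (hH_im : ∀ z : ℂ, 0 < z.im → z.im < R → 0 < (α * δ - β * γ) * (H z).im) {z : ℂ}
    (hz₀ : 0 ≤ z.im) (hzR : z.im < R) :
    AnalyticAt ℂ (mobiusExtension α β γ δ φ₁ φ₂ H) z := by
  rcases hz₀.eq_or_lt with him | him
  · lift z to ℝ using him.symm
    by_cases ht : φ₁ z = 0
    · exact analyticAt_of_eq_zero hR hH ht (hden z)
    · refine analyticAt_of_mem hH (ofReal_mem_puncturedStrip hR ht) ?_
      rw [add_mul_eq_div hH _ _ ht]
      exact Complex.ofReal_ne_zero.2 (div_ne_zero (hden z) ht)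
  · exact analyticAt_of_mem hH (mem_puncturedStrip_of_im_pos φ₁ him hzR)
      (mobius_denom_ne_zero (hH_im z him hzR).ne')

end mobiusExtension

theorem HypR.exists_analytic_extension {θ : ℝ → ℝ} {R x : ℝ} {f₁ f₂ : ℝ → ℝ} (hHyp : HypR θ R)
    (hR : 0 < R) (hf : IsFundPair θ x f₁ f₂) (hf₁ : ∀ t, f₁ t ≠ 0) :
    ∃ K : ℂ → ℂ, (∀ z : ℂ, 0 ≤ z.im → z.im < R → AnalyticAt ℂ K z) ∧
      (∀ t : ℝ, K t = ((f₂ t / f₁ t : ℝ) : ℂ)) ∧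
      ∀ z : ℂ, 0 < z.im → z.im < R → 0 < (K z).im := by
  obtain ⟨φ₁, φ₂, H, hφ₁, hφ₂, hW, hH_eq, hH_diff, hH_pole, hH_im⟩ := hHyp
  obtain ⟨hf₁_sol, hf₂_sol, hf₁x, hf₁x', hf₂x, hf₂x'⟩ := hf
  change wronskian φ₁ φ₂ 0 ≠ 0 at hW
  have hW_eq (t : ℝ) : wronskian φ₁ φ₂ 0 = wronskian φ₁ φ₂ t := wronskian_eq_wronskian hφ₁ hφ₂ 0 t
  have hf₁_eq (t : ℝ) :
      wronskian φ₁ φ₂ 0 * f₁ t = deriv φ₂ x * φ₁ t + -deriv φ₁ x * φ₂ t := by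
    rw [hW_eq x, hf₁_sol.wronskian_mul_eq hφ₁ hφ₂ x t, wronskian, wronskian, hf₁x, hf₁x']
    ring
  have hf₂_eq (t : ℝ) :
      wronskian φ₁ φ₂ 0 * f₂ t = -φ₂ x * φ₁ t + φ₁ x * φ₂ t := by
    rw [hW_eq x, hf₂_sol.wronskian_mul_eq hφ₁ hφ₂ x t, wronskian, wronskian, hf₂x, hf₂x']
    ring
  have hH : IsStripExtension R φ₁ φ₂ H :=
    ⟨hφ₁.1.continuous, fun t ↦ hφ₁.eventually_ne_zero (hW_eq t ▸ hW), hH_eq, hH_diff, hH_pole⟩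
  have hdet : deriv φ₂ x * φ₁ x - -deriv φ₁ x * -φ₂ x = wronskian φ₁ φ₂ 0 := by
    rw [hW_eq x, wronskian]
    ring
  have hdet_im (z : ℂ) (hz₀ : 0 < z.im) (hzR : z.im < R) :
      0 < (deriv φ₂ x * φ₁ x - -deriv φ₁ x * -φ₂ x) * (H z).im :=
    hdet ▸ pos_of_mul_pos_left (hH_im z hz₀ hzR) hz₀.le
  refine ⟨mobiusExtension (deriv φ₂ x) (-deriv φ₁ x) (-φ₂ x) (φ₁ x) φ₁ φ₂ H,
    fun z hz₀ hzR ↦ mobiusExtension.analyticAt hR hH (fun t ↦ ?_) hdet_im hz₀ hzR, fun t ↦ ?_,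
    fun z hz₀ hzR ↦ mobiusExtension.im_pos hz₀.ne' (hdet_im z hz₀ hzR)⟩
  · rw [← hf₁_eq]
    exact mul_ne_zero hW (hf₁ t)
  · rw [mobiusExtension.ofReal, ← hf₁_eq, ← hf₂_eq, mul_div_mul_left _ _ hW]

theorem schR_eq_re_iteratedDeriv {R x : ℝ} (hR : 0 < R) {f₁ f₂ : ℝ → ℝ} {K : ℂ → ℂ}
    (hK : ∀ t : ℝ, K t = ((f₂ t / f₁ t : ℝ) : ℂ))
    (hK_analytic : AnalyticAt ℂ (fun w ↦ K (x + complexGR R w)) (0 : ℝ)) (n : ℕ) :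
    SchR R x f₁ f₂ n = (iteratedDeriv n (fun w ↦ K (x + complexGR R w)) 0).re := by
  rw [← Complex.ofReal_zero, ← iteratedDeriv_re_ofReal_of_analyticAt n hK_analytic, SchR]
  refine EventuallyEq.iteratedDeriv_eq n ?_
  have hlt : ∀ᶠ t : ℝ in 𝓝 0, |t| < R / Real.pi :=
    (isOpen_lt continuous_abs continuous_const).mem_nhds (by simpa using div_pos hR Real.pi_pos)
  filter_upwards [hlt] with t ht
  rw [complexGR.eq_gR hR ht, ← Complex.ofReal_add, hK, Complex.ofReal_re]

theorem stmt4_general {θ : ℝ → ℝ} {R x : ℝ} (hR : 0 < R) (hHyp : HypR θ R) {f₁ f₂ : ℝ → ℝ}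
    (hf : IsFundPair θ x f₁ f₂) (hf₁ : ∀ t, f₁ t ≠ 0) :
    ∃ μ : Measure ℝ, IsFiniteMeasure μ ∧ μ (Icc (-(Real.pi / R)) (Real.pi / R))ᶜ = 0 ∧
      ∀ n : ℕ, 1 ≤ n →
        SchR R x f₁ f₂ n = (Nat.factorial n : ℝ) * ∫ t : ℝ, t ^ (n - 1) ∂μ := by
  obtain ⟨K, hK, hK_eq, hK_im⟩ := hHyp.exists_analytic_extension hR hf hf₁
  have hr : 0 < R / Real.pi := by positivity
  have hG : IsPick (R / Real.pi) fun w ↦ K (x + complexGR R w) :=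
    complexGR.isPick_comp hR hK (fun t ↦ by rw [hK_eq, Complex.ofReal_im])
      (fun z hz₀ hzR ↦ (hK_im z hz₀ hzR).le) x
  obtain ⟨μ, hμ, hμ_supp, hμ_moment⟩ := hG.isMomentSeqOn hr
  rw [inv_div] at hμ_supp
  refine ⟨μ, hμ, hμ_supp, fun n hn ↦ ?_⟩
  obtain ⟨k, rfl⟩ := Nat.exists_eq_add_of_le' hn
  rw [Nat.add_sub_cancel, hμ_moment k,
    schR_eq_re_iteratedDeriv hR hK_eq (hG.analyticAt_ofReal 0 (by simpa using hr)),
    mul_div_cancel₀ _ (Nat.cast_ne_zero.2 (k + 1).factorial_ne_zero)]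

end

/-- If θ is smooth and nonpositive, `0 < R`, and Hypothesis (H_R) holds,
then for every `x` there is a nonnegative Borel measure `μ_x` supported in
`[-π/R, π/R]` with `𝒮_n^{θ,g_R}(x) = n!·∫ t^{n-1} dμ_x(t)` for all `n ≥ 1`. -/
theorem stmt4 (θ : ℝ → ℝ) (hθ : ContDiff ℝ (⊤ : ℕ∞) θ) (R : ℝ) (hR : 0 < R)
    (hHyp : HypR θ R) (hneg : ∀ t : ℝ, θ t ≤ 0) :
    ∀ (x : ℝ) (f₁ f₂ : ℝ → ℝ), IsFundPair θ x f₁ f₂ →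
      ∃ μ : Measure ℝ, IsFiniteMeasure μ ∧
        μ (Set.Icc (-(Real.pi / R)) (Real.pi / R))ᶜ = 0 ∧
        ∀ n : ℕ, 1 ≤ n →
          SchR R x f₁ f₂ n = (Nat.factorial n : ℝ) * ∫ t : ℝ, t ^ (n - 1) ∂μ :=
  fun _ _ _ hf ↦ stmt4_general hR hHyp hf <|
    hf.1.ne_zero_of_nonpos hneg (hf.2.2.1 ▸ one_ne_zero) hf.2.2.2.1

end
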